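/- Suppose |α| = |β| = |γ| = 1 and γ = -αβ. Then in H_{α,β,γ} the element z = -γ(α - e₁e₂) + (β - e₂e₃) - α(γ - e₃e₁) is central, and the center of H_{α,β,γ} is 3-dimensional, spanned by 1, c = βe₁ - γe₂ + αe₃ - e₁e₂e₃, and z. -/

import Mathlib

/-- The defining relations of the algebra `H_{α,β,γ}`. -/
inductive HRel (α β γ : ℝ) : FreeAlgebra ℝ (Fin 3) → FreeAlgebra ℝ (Fin 3) → Prop
  | sq1 : HRel α β γ (FreeAlgebra.ι ℝ 0 * FreeAlgebra.ι ℝ 0) (-1)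
  | sq2 : HRel α β γ (FreeAlgebra.ι ℝ 1 * FreeAlgebra.ι ℝ 1) (-1)
  | sq3 : HRel α β γ (FreeAlgebra.ι ℝ 2 * FreeAlgebra.ι ℝ 2) (-1)
  | ac12 : HRel α β γ (FreeAlgebra.ι ℝ 0 * FreeAlgebra.ι ℝ 1 + FreeAlgebra.ι ℝ 1 * FreeAlgebra.ι ℝ 0)
      (algebraMap ℝ (FreeAlgebra ℝ (Fin 3)) (2 * α))
  | ac23 : HRel α β γ (FreeAlgebra.ι ℝ 1 * FreeAlgebra.ι ℝ 2 + FreeAlgebra.ι ℝ 2 * FreeAlgebra.ι ℝ 1)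
      (algebraMap ℝ (FreeAlgebra ℝ (Fin 3)) (2 * β))
  | ac31 : HRel α β γ (FreeAlgebra.ι ℝ 2 * FreeAlgebra.ι ℝ 0 + FreeAlgebra.ι ℝ 0 * FreeAlgebra.ι ℝ 2)
      (algebraMap ℝ (FreeAlgebra ℝ (Fin 3)) (2 * γ))

/-- The algebra `H_{α,β,γ}`. -/
abbrev HAlg (α β γ : ℝ) : Type := RingQuot (HRel α β γ)

/-- The generators `e₁, e₂, e₃` of `H_{α,β,γ}` (indexed `0, 1, 2`). -/
noncomputable def eH (α β γ : ℝ) (i : Fin 3) : HAlg α β γ :=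
  RingQuot.mkAlgHom ℝ (HRel α β γ) (FreeAlgebra.ι ℝ i)

/-- The central element `c = βe₁ - γe₂ + αe₃ - e₁e₂e₃` of `H_{α,β,γ}`. -/
noncomputable def cH (α β γ : ℝ) : HAlg α β γ :=
  β • eH α β γ 0 - γ • eH α β γ 1 + α • eH α β γ 2 - eH α β γ 0 * eH α β γ 1 * eH α β γ 2

/-- The element `z = -γ(α - e₁e₂) + (β - e₂e₃) - α(γ - e₃e₁)` of `H_{α,β,γ}`. -/
noncomputable def zH (α β γ : ℝ) : HAlg α β γ :=
  (-γ) • (algebraMap ℝ (HAlg α β γ) α - eH α β γ 0 * eH α β γ 1) +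
    (algebraMap ℝ (HAlg α β γ) β - eH α β γ 1 * eH α β γ 2) -
    α • (algebraMap ℝ (HAlg α β γ) γ - eH α β γ 2 * eH α β γ 0)

/-!
`H` is the Clifford algebra of a quadratic form which here has rank one, so `e₁` is completed to an
orthogonal basis by the null vectors `f₂ = -(e₂ + αe₁)` and `f₃ = e₃ + γe₁`, normalized so that
`z = f₂f₃` and `c = e₁f₂f₃`. Then `H` is the sum of the span of `1, e₁, f₂f₃, e₁f₂f₃`, which
commutes with `e₁`, and the span of `f₂, f₃, e₁f₂, e₁f₃`, which anticommutes with it. A central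
element has no anticommuting part, and its `e₁`-coefficient vanishes because it commutes with `f₂`.

That `1, e₁f₂f₃, f₂f₃` are independent follows from `f₂f₃ ≠ 0`, since `e₁² = -1` and `-1` is not a
square. To see that `f₂f₃ ≠ 0`, map `e₁, f₂, f₃` to `i, ε₁j, ε₂k` in the quaternions over
`ℝ[ε₁, ε₂]` with `ε₁² = ε₂² = 0`.
-/

section General

variable {K A : Type*} [Ring A]

theorem eq_top_of_adjoin_eq_top_of_mul_mem [CommRing K] [Algebra K A] {s : Set A}
    (hs : Algebra.adjoin K s = ⊤) {N : Submodule K A} (one_mem : 1 ∈ N)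
    (mul_mem : ∀ a ∈ s, ∀ x ∈ N, a * x ∈ N) : N = ⊤ := by
  have mul_mem_of_mem (a : A) : ∀ x ∈ N, a * x ∈ N := by
    have ha : a ∈ Algebra.adjoin K s := hs ▸ Algebra.mem_top
    induction ha using Algebra.adjoin_induction with
    | mem a ha => exact mul_mem a ha
    | algebraMap r =>
      intro x hx
      rw [← Algebra.smul_def]
      exact N.smul_mem r hx
    | add a b _ _ iha ihb =>
      intro x hx
      rw [add_mul]
      exact N.add_mem (iha x hx) (ihb x hx)
    | mul a b _ _ iha ihb =>
      intro x hx
      rw [mul_assoc]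
      exact iha _ (ihb x hx)
  exact eq_top_iff.2 fun a _ ↦ mul_one a ▸ mul_mem_of_mem a 1 one_mem

theorem mem_center_of_adjoin_eq_top [CommRing K] [Algebra K A] {s : Set A}
    (hs : Algebra.adjoin K s = ⊤) {x : A} (hx : ∀ a ∈ s, Commute x a) :
    x ∈ Subalgebra.center K A :=
  Subalgebra.mem_center_iff.2 fun _ ↦
    (Algebra.commute_of_mem_adjoin_of_forall_mem_commute (hs ▸ Algebra.mem_top) hx).symm

theorem eq_zero_of_eq_neg_self {M : Type*} (K : Type*) [Field K] [NeZero (2 : K)]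
    [AddCommGroup M] [Module K M] {x : M} (h : x = -x) : x = 0 := by
  have h2 : (2 : K) • x = 0 := by rw [two_smul, ← eq_neg_iff_add_eq_zero]; exact h
  exact (smul_eq_zero_iff_right two_ne_zero).1 h2

end General

/-- The relations satisfied in the Clifford algebra of the diagonal form `⟨q, 0, 0⟩` by the three
vectors of an orthogonal basis. They are stated for elements of an arbitrary algebra, so that they
apply both to `H_{α,β,γ}` and to its quaternion model. -/
structure IsDegenerateTriple {K A : Type*} [CommRing K] [Ring A] [Algebra K A] (q : K)
    (f₁ f₂ f₃ : A) : Prop where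
  sq₁ : f₁ * f₁ = q • 1
  sq₂ : f₂ * f₂ = 0
  sq₃ : f₃ * f₃ = 0
  anti₂₁ : f₂ * f₁ = -(f₁ * f₂)
  anti₃₁ : f₃ * f₁ = -(f₁ * f₃)
  anti₃₂ : f₃ * f₂ = -(f₂ * f₃)

namespace IsDegenerateTriple

section CommRing

variable {K A : Type*} [CommRing K] [Ring A] [Algebra K A] {q : K} {f₁ f₂ f₃ : A}

theorem sq₁_mul (h : IsDegenerateTriple q f₁ f₂ f₃) (x : A) : f₁ * (f₁ * x) = q • x := by
  rw [← mul_assoc, h.sq₁, smul_one_mul]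

theorem sq₂_mul (h : IsDegenerateTriple q f₁ f₂ f₃) (x : A) : f₂ * (f₂ * x) = 0 := by
  rw [← mul_assoc, h.sq₂, zero_mul]

theorem anti₂₁_mul (h : IsDegenerateTriple q f₁ f₂ f₃) (x : A) :
    f₂ * (f₁ * x) = -(f₁ * (f₂ * x)) := by
  rw [← mul_assoc, h.anti₂₁, neg_mul, mul_assoc]

theorem anti₃₁_mul (h : IsDegenerateTriple q f₁ f₂ f₃) (x : A) :
    f₃ * (f₁ * x) = -(f₁ * (f₃ * x)) := by
  rw [← mul_assoc, h.anti₃₁, neg_mul, mul_assoc]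

theorem anti₃₂_mul (h : IsDegenerateTriple q f₁ f₂ f₃) (x : A) :
    f₃ * (f₂ * x) = -(f₂ * (f₃ * x)) := by
  rw [← mul_assoc, h.anti₃₂, neg_mul, mul_assoc]

theorem span_sup_span_eq_top (h : IsDegenerateTriple q f₁ f₂ f₃)
    (hgen : Algebra.adjoin K {f₁, f₂, f₃} = ⊤) :
    Submodule.span K {f₁, 1, f₁ * (f₂ * f₃), f₂ * f₃} ⊔
      Submodule.span K {f₂, f₃, f₁ * f₂, f₁ * f₃} = ⊤ := by
  rw [← Submodule.span_union]
  refine eq_top_of_adjoin_eq_top_of_mul_mem hgen (Submodule.mem_span_of_mem (by simp)) ?_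
  intro a ha x hx
  refine (Submodule.map_span_le (LinearMap.mulLeft K a) _ _).2 ?_ (Submodule.mem_map_of_mem hx)
  intro m hm
  rcases ha with rfl | rfl | rfl <;>
    rcases hm with (rfl | rfl | rfl | rfl) | rfl | rfl | rfl | rfl <;>
    simp [h.sq₁, h.sq₂, h.sq₃, h.anti₂₁, h.anti₃₁, h.anti₃₂, h.sq₁_mul, h.sq₂_mul,
      h.anti₂₁_mul, h.anti₃₁_mul, h.anti₃₂_mul, Submodule.smul_mem, Submodule.mem_span_of_mem]

theorem mul_mem_center (h : IsDegenerateTriple q f₁ f₂ f₃)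
    (hgen : Algebra.adjoin K {f₁, f₂, f₃} = ⊤) : f₂ * f₃ ∈ Subalgebra.center K A := by
  refine mem_center_of_adjoin_eq_top hgen ?_
  rintro _ (rfl | rfl | rfl) <;>
    simp [Commute, SemiconjBy, mul_assoc, h.sq₃, h.anti₃₁, h.anti₃₂, h.sq₂_mul, h.anti₂₁_mul,
      h.anti₃₂_mul]

theorem mul_mul_mem_center (h : IsDegenerateTriple q f₁ f₂ f₃)
    (hgen : Algebra.adjoin K {f₁, f₂, f₃} = ⊤) :
    f₁ * (f₂ * f₃) ∈ Subalgebra.center K A := by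
  refine mem_center_of_adjoin_eq_top hgen ?_
  rintro _ (rfl | rfl | rfl) <;>
    simp [Commute, SemiconjBy, mul_assoc, h.sq₃, h.anti₃₁, h.anti₃₂, h.sq₂_mul, h.anti₂₁_mul,
      h.anti₃₁_mul, h.anti₃₂_mul]

theorem span_le_center (h : IsDegenerateTriple q f₁ f₂ f₃)
    (hgen : Algebra.adjoin K {f₁, f₂, f₃} = ⊤) :
    Submodule.span K {1, f₁ * (f₂ * f₃), f₂ * f₃} ≤
      Subalgebra.toSubmodule (Subalgebra.center K A) := by
  rw [Submodule.span_le]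
  rintro _ (rfl | rfl | rfl)
  · exact one_mem (Subalgebra.center K A)
  · exact h.mul_mul_mem_center hgen
  · exact h.mul_mem_center hgen

theorem mul_eq_neg_mul_of_mem_span (h : IsDegenerateTriple q f₁ f₂ f₃) {v : A}
    (hv : v ∈ Submodule.span K {f₂, f₃, f₁ * f₂, f₁ * f₃}) : f₁ * v = -(v * f₁) := by
  induction hv using Submodule.span_induction with
  | mem v hv =>
    rcases hv with rfl | rfl | rfl | rfl <;> simp [h.anti₂₁, h.anti₃₁, mul_assoc]
  | zero => simp
  | add u v _ _ hu hv => rw [mul_add, add_mul, hu, hv, neg_add]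
  | smul r v _ hv => rw [mul_smul_comm, smul_mul_assoc, hv, smul_neg]

end CommRing

section Field

variable {K A : Type*} [Field K] [Ring A] [Algebra K A] {q : K} {f₁ f₂ f₃ : A}

theorem eq_zero_of_mul_eq_zero (h : IsDegenerateTriple q f₁ f₂ f₃) (hq : q ≠ 0) {x : A}
    (hx : f₁ * x = 0) : x = 0 := by
  have : q • x = 0 := by rw [← h.sq₁_mul, hx, mul_zero]
  exact (smul_eq_zero_iff_right hq).1 this

theorem center_le_span [NeZero (2 : K)] (h : IsDegenerateTriple q f₁ f₂ f₃) (hq : q ≠ 0)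
    (hgen : Algebra.adjoin K {f₁, f₂, f₃} = ⊤) (hne : f₂ * f₃ ≠ 0) :
    Subalgebra.toSubmodule (Subalgebra.center K A) ≤
      Submodule.span K {1, f₁ * (f₂ * f₃), f₂ * f₃} := by
  intro x hx
  have hx_top : x ∈ (⊤ : Submodule K A) := Submodule.mem_top
  rw [← h.span_sup_span_eq_top hgen] at hx_top
  obtain ⟨u, hu, v, hv, rfl⟩ := Submodule.mem_sup.1 hx_top
  obtain ⟨b, w, hw, rfl⟩ := Submodule.mem_span_insert.1 hu
  have hcentral : b • f₁ + v ∈ Subalgebra.center K A := by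
    have := sub_mem hx (h.span_le_center hgen hw)
    rwa [add_right_comm, add_sub_cancel_right] at this
  have hcomm (y : A) : y * (b • f₁ + v) = (b • f₁ + v) * y :=
    Subalgebra.mem_center_iff.1 hcentral y
  have hv_zero : v = 0 := by
    have hcomm₁ : f₁ * v = v * f₁ := by simpa [mul_add, add_mul] using hcomm f₁
    exact h.eq_zero_of_mul_eq_zero hq <| eq_zero_of_eq_neg_self K <|
      (h.mul_eq_neg_mul_of_mem_span hv).trans (congrArg _ hcomm₁.symm)
  have hb_zero : b = 0 := by
    have hcomm₂ : b • (f₁ * f₂) = 0 := by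
      refine eq_zero_of_eq_neg_self K ?_
      simpa [hv_zero, h.anti₂₁] using (hcomm f₂).symm
    have hω : b • (f₁ * (f₂ * f₃)) = 0 := by
      rw [← mul_assoc, ← smul_mul_assoc, hcomm₂, zero_mul]
    exact (smul_eq_zero_iff_left fun h0 ↦ hne (h.eq_zero_of_mul_eq_zero hq h0)).1 hω
  simpa [hb_zero, hv_zero] using hw

theorem center_eq_span [NeZero (2 : K)] (h : IsDegenerateTriple q f₁ f₂ f₃) (hq : q ≠ 0)
    (hgen : Algebra.adjoin K {f₁, f₂, f₃} = ⊤) (hne : f₂ * f₃ ≠ 0) :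
    Subalgebra.toSubmodule (Subalgebra.center K A) =
      Submodule.span K {1, f₁ * (f₂ * f₃), f₂ * f₃} :=
  le_antisymm (h.center_le_span hq hgen hne) (h.span_le_center hgen)

theorem eq_zero_of_smul_add_smul_eq_zero (h : IsDegenerateTriple q f₁ f₂ f₃)
    (hq : ¬ IsSquare q) (hne : f₂ * f₃ ≠ 0) {b c : K}
    (hbc : b • (f₁ * (f₂ * f₃)) + c • (f₂ * f₃) = 0) : b = 0 ∧ c = 0 := by
  have hnorm : b * b * q - c * c = 0 := by
    refine (smul_eq_zero_iff_left hne).1 ?_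
    calc (b * b * q - c * c) • (f₂ * f₃)
        = (b • f₁ - c • 1) * (b • (f₁ * (f₂ * f₃)) + c • (f₂ * f₃)) := by
          simp only [sub_mul, mul_add, smul_mul_assoc, mul_smul_comm, one_mul, h.sq₁_mul]
          module
      _ = 0 := by rw [hbc, mul_zero]
  have hb : b = 0 := by
    by_contra hb
    exact hq ⟨c / b, by field_simp; linear_combination hnorm⟩
  exact ⟨hb, by simpa [hb] using hnorm⟩

theorem linearIndependent (h : IsDegenerateTriple q f₁ f₂ f₃) (hq : ¬ IsSquare q)
    (hne : f₂ * f₃ ≠ 0) : LinearIndependent K ![1, f₁ * (f₂ * f₃), f₂ * f₃] := by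
  rw [Fintype.linearIndependent_iff]
  intro g hg
  simp only [Fin.sum_univ_three, Matrix.cons_val] at hg
  have h₀ : g 0 = 0 := by
    refine (smul_eq_zero_iff_left hne).1 ?_
    have := congrArg (· * (f₂ * f₃)) hg
    simpa [add_mul, mul_assoc, h.sq₂_mul, h.anti₃₂_mul] using this
  obtain ⟨h₁, h₂⟩ := h.eq_zero_of_smul_add_smul_eq_zero hq hne (by simpa [h₀] using hg)
  intro i
  fin_cases i
  exacts [h₀, h₁, h₂]

theorem finrank_center [NeZero (2 : K)] (h : IsDegenerateTriple q f₁ f₂ f₃)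
    (hq : ¬ IsSquare q) (hgen : Algebra.adjoin K {f₁, f₂, f₃} = ⊤) (hne : f₂ * f₃ ≠ 0) :
    Module.finrank K (Subalgebra.center K A) = 3 := by
  have hq_zero : q ≠ 0 := by
    rintro rfl
    exact hq .zero
  rw [← Subalgebra.finrank_toSubmodule, h.center_eq_span hq_zero hgen hne]
  have hrange : Set.range ![1, f₁ * (f₂ * f₃), f₂ * f₃] = {1, f₁ * (f₂ * f₃), f₂ * f₃} := by
    simp only [Matrix.range_cons, Matrix.range_empty, Set.union_empty, Set.singleton_union]
  rw [← hrange, finrank_span_eq_card (h.linearIndependent hq hne), Fintype.card_fin]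

end Field

end IsDegenerateTriple

theorem isDegenerateTriple_quaternion {K R : Type*} [CommRing K] [CommRing R] [Algebra K R]
    {s t : R} (hs : s * s = 0) (ht : t * t = 0) :
    IsDegenerateTriple (-1 : K) (⟨0, 1, 0, 0⟩ : Quaternion R) ⟨0, 0, s, 0⟩ ⟨0, 0, 0, t⟩ := by
  constructor <;> ext <;> simp [hs, ht, mul_comm]

/-- The defining relations of `H_{α,β,γ}`, for three elements of an arbitrary algebra. Such a triple
is the same as a homomorphism from `H_{α,β,γ}`, and computations with it do not unfold the quotient
that defines `H_{α,β,γ}`. -/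
structure IsHTriple {K A : Type*} [CommRing K] [Ring A] [Algebra K A] (α β γ : K)
    (e₁ e₂ e₃ : A) : Prop where
  sq₁ : e₁ * e₁ = -1
  sq₂ : e₂ * e₂ = -1
  sq₃ : e₃ * e₃ = -1
  add₁₂ : e₁ * e₂ + e₂ * e₁ = algebraMap K A (2 * α)
  add₂₃ : e₂ * e₃ + e₃ * e₂ = algebraMap K A (2 * β)
  add₃₁ : e₃ * e₁ + e₁ * e₃ = algebraMap K A (2 * γ)

section Orthogonalization

variable {K A : Type*} [CommRing K] [Ring A] [Algebra K A] {α β γ : K}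

namespace IsHTriple

variable {e₁ e₂ e₃ : A}

theorem mul₂₁ (h : IsHTriple α β γ e₁ e₂ e₃) : e₂ * e₁ = (2 * α) • 1 - e₁ * e₂ := by
  rw [← Algebra.algebraMap_eq_smul_one, ← h.add₁₂, add_sub_cancel_left]

theorem mul₃₂ (h : IsHTriple α β γ e₁ e₂ e₃) : e₃ * e₂ = (2 * β) • 1 - e₂ * e₃ := by
  rw [← Algebra.algebraMap_eq_smul_one, ← h.add₂₃, add_sub_cancel_left]

theorem mul₃₁ (h : IsHTriple α β γ e₁ e₂ e₃) : e₃ * e₁ = (2 * γ) • 1 - e₁ * e₃ := by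
  rw [← Algebra.algebraMap_eq_smul_one, ← h.add₃₁, add_sub_cancel_right]

theorem isDegenerateTriple (h : IsHTriple α β γ e₁ e₂ e₃) (hα : α ^ 2 = 1) (hγ : γ ^ 2 = 1)
    (hβ : β = -(α * γ)) :
    IsDegenerateTriple (-1 : K) e₁ (-(e₂ + α • e₁)) (e₃ + γ • e₁) := by
  constructor <;>
    simp only [mul_add, add_mul, mul_neg, neg_mul, smul_mul_assoc, mul_smul_comm, h.sq₁, h.sq₂,
      h.sq₃, h.mul₂₁, h.mul₃₂, h.mul₃₁] <;>
    match_scalars <;> grind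

theorem combination_eq_mul (h : IsHTriple α β γ e₁ e₂ e₃) (hβ : β = -(α * γ)) :
    (-γ) • (algebraMap K A α - e₁ * e₂) + (algebraMap K A β - e₂ * e₃) -
        α • (algebraMap K A γ - e₃ * e₁) =
      -(e₂ + α • e₁) * (e₃ + γ • e₁) := by
  simp only [mul_add, add_mul, neg_mul, smul_mul_assoc, mul_smul_comm, h.sq₁, h.mul₂₁, h.mul₃₁,
    Algebra.algebraMap_eq_smul_one]
  match_scalars <;> grind

theorem combination_eq_mul_mul (h : IsHTriple α β γ e₁ e₂ e₃) (hβ : β = -(α * γ)) :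
    β • e₁ - γ • e₂ + α • e₃ - e₁ * e₂ * e₃ =
      e₁ * (-(e₂ + α • e₁) * (e₃ + γ • e₁)) := by
  have sq₁_mul (x : A) : e₁ * (e₁ * x) = -x := by rw [← mul_assoc, h.sq₁, neg_one_mul]
  simp only [mul_add, add_mul, mul_sub, mul_neg, neg_mul, smul_mul_assoc, mul_smul_comm, mul_one,
    mul_assoc, sq₁_mul, h.sq₁, h.mul₂₁]
  match_scalars <;> grind

end IsHTriple

theorem adjoin_orthogonalized_eq_top {e₁ e₂ e₃ : A} (α γ : K)
    (hgen : Algebra.adjoin K {e₁, e₂, e₃} = ⊤) :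
    Algebra.adjoin K {e₁, -(e₂ + α • e₁), e₃ + γ • e₁} = ⊤ := by
  rw [eq_top_iff, ← hgen, Algebra.adjoin_le_iff]
  set S := Algebra.adjoin K {e₁, -(e₂ + α • e₁), e₃ + γ • e₁}
  have h₁ : e₁ ∈ S := Algebra.subset_adjoin (by simp)
  have h₂ : -(e₂ + α • e₁) ∈ S := Algebra.subset_adjoin (by simp)
  have h₃ : e₃ + γ • e₁ ∈ S := Algebra.subset_adjoin (by simp)
  rintro _ (rfl | rfl | rfl)
  · exact h₁
  · simpa using sub_mem (neg_mem h₂) (S.smul_mem h₁ α)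
  · simpa using sub_mem h₃ (S.smul_mem h₁ γ)

theorem IsDegenerateTriple.isHTriple {f₁ f₂ f₃ : A}
    (h : IsDegenerateTriple (-1 : K) f₁ f₂ f₃) (hα : α ^ 2 = 1) (hγ : γ ^ 2 = 1)
    (hβ : β = -(α * γ)) :
    IsHTriple α β γ f₁ (-f₂ - α • f₁) (f₃ - γ • f₁) := by
  constructor <;>
    simp only [mul_sub, sub_mul, mul_neg, neg_mul, smul_mul_assoc, mul_smul_comm, h.sq₁, h.sq₂,
      h.sq₃, h.anti₂₁, h.anti₃₁, h.anti₃₂, Algebra.algebraMap_eq_smul_one] <;>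
    match_scalars <;> grind

end Orthogonalization

section HAlg

variable {α β γ : ℝ}

theorem adjoin_eH_eq_top (α β γ : ℝ) :
    Algebra.adjoin ℝ {eH α β γ 0, eH α β γ 1, eH α β γ 2} = ⊤ := by
  have hrange : {eH α β γ 0, eH α β γ 1, eH α β γ 2} =
      RingQuot.mkAlgHom ℝ (HRel α β γ) '' Set.range (FreeAlgebra.ι ℝ) := by
    ext x
    simp [Fin.exists_fin_succ, eH, eq_comm]
  rw [hrange, ← AlgHom.map_adjoin, FreeAlgebra.adjoin_range_ι, Algebra.map_top,
    AlgHom.range_eq_top]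
  exact RingQuot.mkAlgHom_surjective ℝ _

theorem isHTriple_eH : IsHTriple α β γ (eH α β γ 0) (eH α β γ 1) (eH α β γ 2) where
  sq₁ := by simpa [eH] using RingQuot.mkAlgHom_rel ℝ (HRel.sq1 (α := α) (β := β) (γ := γ))
  sq₂ := by simpa [eH] using RingQuot.mkAlgHom_rel ℝ (HRel.sq2 (α := α) (β := β) (γ := γ))
  sq₃ := by simpa [eH] using RingQuot.mkAlgHom_rel ℝ (HRel.sq3 (α := α) (β := β) (γ := γ))
  add₁₂ := by
    simpa only [eH, map_add, map_mul, AlgHom.commutes] using RingQuot.mkAlgHom_rel ℝ HRel.ac12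
  add₂₃ := by
    simpa only [eH, map_add, map_mul, AlgHom.commutes] using RingQuot.mkAlgHom_rel ℝ HRel.ac23
  add₃₁ := by
    simpa only [eH, map_add, map_mul, AlgHom.commutes] using RingQuot.mkAlgHom_rel ℝ HRel.ac31

theorem IsHTriple.exists_algHom {A : Type*} [Ring A] [Algebra ℝ A] {e₁ e₂ e₃ : A}
    (h : IsHTriple α β γ e₁ e₂ e₃) :
    ∃ φ : HAlg α β γ →ₐ[ℝ] A,
      φ (eH α β γ 0) = e₁ ∧ φ (eH α β γ 1) = e₂ ∧ φ (eH α β γ 2) = e₃ := by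
  set ψ : FreeAlgebra ℝ (Fin 3) →ₐ[ℝ] A := FreeAlgebra.lift ℝ ![e₁, e₂, e₃]
  have hψ ⦃x y⦄ (hxy : HRel α β γ x y) : ψ x = ψ y := by
    cases hxy with
    | sq1 => simpa [ψ] using h.sq₁
    | sq2 => simpa [ψ] using h.sq₂
    | sq3 => simpa [ψ] using h.sq₃
    | ac12 => simpa [ψ] using h.add₁₂
    | ac23 => simpa [ψ] using h.add₂₃
    | ac31 => simpa [ψ] using h.add₃₁
  exact ⟨RingQuot.liftAlgHom ℝ ⟨ψ, hψ⟩, by simp [eH, ψ], by simp [eH, ψ], by simp [eH, ψ]⟩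

open DualNumber in
theorem orthogonalized_eH_mul_ne_zero (hα : α ^ 2 = 1) (hγ : γ ^ 2 = 1)
    (hβ : β = -(α * γ)) :
    -(eH α β γ 1 + α • eH α β γ 0) * (eH α β γ 2 + γ • eH α β γ 0) ≠ 0 := by
  have hs : (TrivSqZeroExt.inl ε : ℝ[ε][ε]) * TrivSqZeroExt.inl ε = 0 := by
    rw [← TrivSqZeroExt.inl_mul, eps_mul_eps, TrivSqZeroExt.inl_zero]
  have ht : (ε : ℝ[ε][ε]) * ε = 0 := eps_mul_eps
  obtain ⟨φ, hφ₁, hφ₂, hφ₃⟩ :=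
    ((isDegenerateTriple_quaternion (K := ℝ) (R := ℝ[ε][ε]) hs ht).isHTriple hα hγ hβ).exists_algHom
  intro h
  -- The image of `f₂ * f₃` in the quaternions is `ε₁ε₂ i`.
  have himage := congrArg (fun x ↦ (φ x).imI.snd.snd) h
  simp [hφ₁, hφ₂, hφ₃] at himage

end HAlg

/-- If `|α| = |β| = |γ| = 1` and `γ = -αβ`, then `z` is central and the
center of `H_{α,β,γ}` is 3-dimensional, spanned by `1`, `c`, `z`. -/
theorem stmt_17 (α β γ : ℝ) (hα : |α| = 1) (hβ : |β| = 1) (hγ : |γ| = 1)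
    (hrel : γ = -(α * β)) :
    zH α β γ ∈ Subalgebra.center ℝ (HAlg α β γ) ∧
      Subalgebra.toSubmodule (Subalgebra.center ℝ (HAlg α β γ)) =
        Submodule.span ℝ ({1, cH α β γ, zH α β γ} : Set (HAlg α β γ)) ∧
      Module.finrank ℝ (Subalgebra.center ℝ (HAlg α β γ)) = 3 := by
  have hα_sq : α ^ 2 = 1 := by rw [← sq_abs, hα, one_pow]
  have hγ_sq : γ ^ 2 = 1 := by rw [← sq_abs, hγ, one_pow]
  have hβ_eq : β = -(α * γ) := by rw [hrel]; linear_combination -β * hα_sq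
  have htriple := isHTriple_eH.isDegenerateTriple hα_sq hγ_sq hβ_eq
  have hgen := adjoin_orthogonalized_eq_top α γ (adjoin_eH_eq_top α β γ)
  have hne := orthogonalized_eH_mul_ne_zero hα_sq hγ_sq hβ_eq
  have hnonsq : ¬ IsSquare (-1 : ℝ) := fun h ↦ absurd h.nonneg (by norm_num)
  rw [zH, cH, isHTriple_eH.combination_eq_mul hβ_eq, isHTriple_eH.combination_eq_mul_mul hβ_eq]
  exact ⟨htriple.mul_mem_center hgen, htriple.center_eq_span (by norm_num) hgen hne,
    htriple.finrank_center hnonsq hgen hne⟩
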